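/- Let A be a commutative ring, let R be an A-algebra, and let I ⊆ R be an ideal. Let M be an R-module such that for every t ≥ 1 the quotient M/I^t M is a finitely generated free A-module. Then Hom_A^cts(M, A) is a free A-module. -/

import Mathlib

/-- The relative Matlis dual / continuous dual: the `A`-submodule of `Hom_A(M, A)` consisting of
the `A`-linear maps `φ : M → A` such that `φ(IᵗM) = 0` for some `t`. -/
def ContinuousDual (A : Type*) [CommRing A] (R : Type*) [CommRing R] [Algebra A R]
    (I : Ideal R) (M : Type*) [AddCommGroup M] [Module A M] [Module R M] :
    Submodule A (M →ₗ[A] A) where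
  carrier := {φ | ∃ t : ℕ, ∀ r ∈ I ^ t, ∀ m : M, φ (r • m) = 0}
  add_mem' := by
    rintro φ ψ ⟨t, ht⟩ ⟨s, hs⟩
    exact ⟨t + s, fun r hr m => by
      have h1 := ht r (Ideal.pow_le_pow_right (Nat.le_add_right t s) hr) m
      have h2 := hs r (Ideal.pow_le_pow_right (Nat.le_add_left s t) hr) m
      simp [h1, h2]⟩
  zero_mem' := ⟨0, fun r _ m => rfl⟩
  smul_mem' := by
    rintro a φ ⟨t, ht⟩
    exact ⟨t, fun r hr m => by simp [ht r hr m]⟩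

/-!
The continuous dual `D` is the union of the duals of the `M / I ^ t M`, each a direct summand of the
next; hence it is projective and countably generated. If `I ^ t M` stabilises, `D` is the dual of
some `M / I ^ t M`. Otherwise one can choose, independently of `n`, finitely many `x q ∈ I` and
`e q ∈ M` (`q < N`) such that the order ideals of the classes of `x q ^ n • e q` in
`M / I ^ (n + 1) M` generate `A`: if they generated a proper ideal `a`, the pigeonhole principle
would give `I ^ T M = I ^ (T + 1) M` modulo `a` for some `T`, so that `M / I ^ (T + 1) M` and
`M / I ^ T M` would have the same rank and `I ^ T M = I ^ (T + 1) M`. Using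
`x q ^ (t + N) = x q ^ (N - q) * x q ^ (t + q)`, the `N` contributions can be put in the `N`
consecutive degrees `t + q`, where they combine triangularly into one `m ∈ I ^ t M` and one
continuous form taking the value `1` on it. Such pairs, for a sequence of `t` tending to infinity,
give a surjection from `D` onto `A^(ℕ)`, and the Eilenberg swindle shows that `D ≃ A^(ℕ)`.
-/

open Function Module

section Swindle

variable {A : Type*} [Ring A] {P Q : Type*} [AddCommGroup P] [Module A P]
  [AddCommGroup Q] [Module A Q]

theorem nonempty_equiv_ker_prod_of_surjective [Projective A Q] {g : P →ₗ[A] Q}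
    (hg : Surjective g) : Nonempty (P ≃ₗ[A] LinearMap.ker g × Q) := by
  obtain ⟨l, hl⟩ := projective_lifting_property g LinearMap.id hg
  exact ⟨((LinearMap.exact_subtype_ker_map g).splitSurjectiveEquiv
    (Submodule.subtype_injective _) ⟨l, hl⟩).1⟩

variable (A P Q) in
/-- Finitely supported functions into a product are pairs of finitely supported functions; this
distributes a countable direct sum over the two summands in the swindle. -/
noncomputable def finsuppIntoProdLEquiv (ι : Type*) : (ι →₀ P × Q) ≃ₗ[A] (ι →₀ P) × (ι →₀ Q) :=
  LinearEquiv.ofLinearMap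
    ((Finsupp.mapRange.linearMap (LinearMap.fst A P Q)).prod
      (Finsupp.mapRange.linearMap (LinearMap.snd A P Q)))
    ((Finsupp.mapRange.linearMap (LinearMap.inl A P Q)).coprod
      (Finsupp.mapRange.linearMap (LinearMap.inr A P Q)))
    (by ext <;> simp) (by ext <;> simp)

variable (A Q) in
theorem nonempty_finsupp_nat_prod_equiv : Nonempty (((ℕ →₀ Q) × Q) ≃ₗ[A] (ℕ →₀ Q)) :=
  ⟨((LinearEquiv.refl A _).prodCongr (Finsupp.uniqueLinearEquiv A Q ()).symm).trans <|
    (Finsupp.sumFinsuppLEquivProdFinsupp A).symm.trans <|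
      Finsupp.domLCongr Equiv.natSumPUnitEquivNat⟩

/- With `Q ⊕ Q' ≃ A^(ℕ)`, one has `A^(ℕ) ≃ (Q ⊕ Q')^(ℕ) ≃ Q'^(ℕ) ⊕ Q^(ℕ)`, and the last summand
absorbs one more copy of `Q`. -/
theorem nonempty_finsupp_nat_prod_equiv_of_surjective [Projective A Q] {g : (ℕ →₀ A) →ₗ[A] Q}
    (hg : Surjective g) : Nonempty (((ℕ →₀ A) × Q) ≃ₗ[A] (ℕ →₀ A)) := by
  obtain ⟨split⟩ := nonempty_equiv_ker_prod_of_surjective hg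
  obtain ⟨absorb⟩ := nonempty_finsupp_nat_prod_equiv A Q
  let e : (ℕ →₀ A) ≃ₗ[A] (ℕ →₀ LinearMap.ker g) × (ℕ →₀ Q) :=
    (Finsupp.domLCongr Nat.pairEquiv.symm).trans <| (Finsupp.curryLinearEquiv A).trans <|
      (Finsupp.mapRange.linearEquiv split).trans <| finsuppIntoProdLEquiv A (LinearMap.ker g) Q ℕ
  exact ⟨(e.prodCongr (LinearEquiv.refl A Q)).trans <| (LinearEquiv.prodAssoc A _ _ _).trans <|
    ((LinearEquiv.refl A _).prodCongr absorb).trans e.symm⟩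

theorem nonempty_equiv_finsupp_nat_of_surjective [Projective A P] {g : (ℕ →₀ A) →ₗ[A] P}
    (hg : Surjective g) {f : P →ₗ[A] (ℕ →₀ A)} (hf : Surjective f) :
    Nonempty (P ≃ₗ[A] (ℕ →₀ A)) := by
  obtain ⟨split⟩ := nonempty_equiv_ker_prod_of_surjective hf
  let proj : P →ₗ[A] LinearMap.ker f := LinearMap.fst A _ _ ∘ₗ split.toLinearMap
  let incl : LinearMap.ker f →ₗ[A] P := split.symm.toLinearMap ∘ₗ LinearMap.inl A _ _
  have hproj : proj ∘ₗ incl = LinearMap.id := by ext x; simp [proj, incl]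
  have : Projective A (LinearMap.ker f) := .of_split incl proj hproj
  have hproj_surj : Surjective proj := LinearMap.surjective_of_comp_eq_id incl proj hproj
  obtain ⟨absorb⟩ := nonempty_finsupp_nat_prod_equiv_of_surjective
    (g := proj ∘ₗ g) (hproj_surj.comp hg)
  exact ⟨split.trans <| (LinearEquiv.prodComm A _ _).trans absorb⟩

theorem surjective_of_unitriangular (f : P →ₗ[A] (ℕ →₀ A)) (p : ℕ → P)
    (hdiag : ∀ k, f (p k) k = 1) (hupper : ∀ k i, k < i → f (p k) i = 0) : Surjective f := by
  have hsingle (k : ℕ) : Finsupp.single k 1 ∈ LinearMap.range f := by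
    induction k using Nat.strong_induction_on with
    | _ k ih =>
      have hsupp : (f (p k)).support ⊆ Finset.range (k + 1) := fun i hi => by
        by_contra hik
        exact Finsupp.mem_support_iff.mp hi (hupper k i (by simpa using hik))
      have hexpand : ∑ i ∈ Finset.range k, f (p k) i • Finsupp.single i (1 : A) +
          Finsupp.single k 1 = f (p k) := by
        conv_rhs => rw [← (f (p k)).sum_single, Finsupp.sum_of_support_subset _ hsupp _ (by simp)]
        simp [Finset.sum_range_succ, hdiag]
      rw [← eq_sub_iff_add_eq'] at hexpand
      rw [hexpand]
      exact sub_mem (LinearMap.mem_range_self f _) <| Submodule.sum_mem _ fun i hi =>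
        Submodule.smul_mem _ _ (ih i (Finset.mem_range.mp hi))
  rw [← LinearMap.range_eq_top, eq_top_iff, ← Finsupp.iSup_lsingle_range (R := A), iSup_le_iff]
  rintro k _ ⟨a, rfl⟩
  simpa using Submodule.smul_mem _ a (hsingle k)

end Swindle

section Projections

variable {A : Type*} [Ring A] {M : Type*} [AddCommGroup M] [Module A M]

theorem exists_isProj_of_projective_quotient (N : Submodule A M) [Projective A (M ⧸ N)] :
    ∃ π : M →ₗ[A] M, LinearMap.IsProj N π := by
  obtain ⟨s, hs⟩ := projective_lifting_property N.mkQ LinearMap.id N.mkQ_surjective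
  replace hs (x : M ⧸ N) : Submodule.Quotient.mk (s x) = x := LinearMap.congr_fun hs x
  refine ⟨LinearMap.id - s ∘ₗ N.mkQ, ⟨fun m => ?_, fun m hm => ?_⟩⟩
  · rw [← Submodule.Quotient.mk_eq_zero, ← N.mkQ_apply]
    simp [hs]
  · simp [(Submodule.Quotient.mk_eq_zero N).mpr hm]

/- `⨆ t, D t` is a retract of `⨁ t, D (t + 1)`: send `x` to the family of its increments
`π (t + 1) x - π t x`, which telescope to `x`. -/
theorem projective_iSup_of_isProj {D : ℕ → Submodule A M} (hD : Monotone D) (hD0 : D 0 = ⊥)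
    {π : ℕ → M →ₗ[A] M} (hπ : ∀ t, LinearMap.IsProj (D t) (π t)) [∀ t, Projective A (D t)] :
    Projective A ↥(⨆ t, D t) := by
  let incr (t : ℕ) : M →ₗ[A] D (t + 1) := (π (t + 1) - π t).codRestrict _ fun x =>
    sub_mem ((hπ _).map_mem x) (hD t.le_succ ((hπ _).map_mem x))
  have incr_eq_zero {x : M} {u t : ℕ} (hx : x ∈ D u) (hut : u ≤ t) : incr t x = 0 := by
    ext
    simp [incr, (hπ _).map_id x (hD hut hx), (hπ _).map_id x (hD (hut.trans t.le_succ) hx)]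
  choose u hu using fun x : ↥(⨆ t, D t) => (Submodule.mem_iSup_of_directed D hD.directed_le).mp x.2
  let incrs (x : ↥(⨆ t, D t)) : Π₀ t, D (t + 1) :=
    ∑ t ∈ Finset.range (u x), DFinsupp.single t (incr t x)
  have incrs_apply (x t) : incrs x t = incr t x := by
    rw [DFinsupp.finsetSum_apply, Finset.sum_eq_single t]
    · simp
    · exact fun s _ hst => DFinsupp.single_eq_of_ne hst.symm
    · intro ht
      simpa using incr_eq_zero (hu x) (by simpa using ht)
  let i : ↥(⨆ t, D t) →ₗ[A] Π₀ t, D (t + 1) :=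
    { toFun := incrs
      map_add' := fun x y => by ext1 t; simp [incrs_apply]
      map_smul' := fun a x => by ext1 t; simp [incrs_apply] }
  let p : (Π₀ t, D (t + 1)) →ₗ[A] ↥(⨆ t, D t) :=
    DFinsupp.lsum ℕ fun t => Submodule.inclusion (le_iSup D (t + 1))
  refine .of_split i p (LinearMap.ext fun x => Subtype.ext ?_)
  have hπ0 : π 0 x = 0 := by simpa [hD0] using (hπ 0).map_mem (x : M)
  calc ((p (i x) : ↥(⨆ t, D t)) : M)
      = ∑ t ∈ Finset.range (u x), (π (t + 1) x - π t x) := by simp [p, i, incrs, incr]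
    _ = x := by rw [Finset.sum_range_sub (π · x), hπ0, sub_zero, (hπ _).map_id x (hu x)]

theorem exists_surjective_finsupp_nat_iSup {D : ℕ → Submodule A M} (hD : ∀ t, (D t).FG) :
    ∃ g : (ℕ →₀ A) →ₗ[A] ↥(⨆ t, D t), Surjective g := by
  choose S hS using hD
  obtain ⟨b, hb⟩ : ∃ b : ℕ → M, insert 0 (⋃ t, (S t : Set M)) = Set.range b :=
    ((Set.countable_iUnion fun t => (S t).countable_toSet).insert 0).exists_eq_range
      (Set.insert_nonempty _ _)
  have hspan : Submodule.span A (Set.range b) = ⨆ t, D t := by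
    rw [← hb, Submodule.span_insert_zero, Submodule.span_iUnion]
    exact iSup_congr hS
  rw [← hspan, ← Finsupp.range_linearCombination]
  exact ⟨_, LinearMap.surjective_rangeRestrict (Finsupp.linearCombination A b)⟩

theorem fg_map_mkQ_of_le {N N' : Submodule A M} (hle : N ≤ N') [Module.Finite A (M ⧸ N)]
    [Module.Finite A (M ⧸ N')] [Projective A (M ⧸ N')] : (N'.map N.mkQ).FG := by
  have := Module.finitePresentation_of_projective A (M ⧸ N')
  have hker : LinearMap.ker (Submodule.factor hle) = N'.map N.mkQ := by
    simp only [Submodule.factor, Submodule.ker_mapQ, Submodule.comap_id]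
  exact hker ▸ Module.FinitePresentation.fg_ker _ (Submodule.factor_surjective hle)

end Projections

section Filtration

variable {A : Type*} [CommRing A] {M : Type*} [AddCommGroup M] [Module A M]
  {F : ℕ → Submodule A M}

variable (F) in
/-- The continuous dual of a module filtered by `F`: the `A`-linear forms that vanish on some `F t`,
i.e. those that are continuous for the topology defined by `F` and the discrete topology on `A`. -/
def filtrationDual : Submodule A (Dual A M) :=
  ⨆ t, (F t).dualAnnihilator

theorem mem_filtrationDual (hF : Antitone F) {φ : Dual A M} :
    φ ∈ filtrationDual F ↔ ∃ t, φ ∈ (F t).dualAnnihilator :=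
  Submodule.mem_iSup_of_directed _
    (show Monotone fun t => (F t).dualAnnihilator from
      fun _ _ h => Submodule.dualAnnihilator_anti (hF h)).directed_le

theorem dualAnnihilator_le_filtrationDual (t : ℕ) :
    (F t).dualAnnihilator ≤ filtrationDual F :=
  le_iSup (fun t => (F t).dualAnnihilator) t

theorem isProj_dualAnnihilator {N : Submodule A M} {π : M →ₗ[A] M} (hπ : LinearMap.IsProj N π) :
    LinearMap.IsProj N.dualAnnihilator (LinearMap.id - π).dualMap where
  map_mem φ := by
    rw [Submodule.mem_dualAnnihilator]
    intro m hm
    simp [hπ.map_id m hm]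
  map_id φ hφ := by
    ext m
    simp [(Submodule.mem_dualAnnihilator φ).mp hφ _ (hπ.map_mem m)]

theorem projective_filtrationDual (hF : Antitone F) (hF0 : F 0 = ⊤)
    [∀ t, Module.Finite A (M ⧸ F t)] [∀ t, Projective A (M ⧸ F t)] :
    Projective A (filtrationDual F) := by
  choose π hπ using fun t => exists_isProj_of_projective_quotient (F t)
  have (t : ℕ) : Projective A (F t).dualAnnihilator :=
    .of_equiv (F t).dualQuotEquivDualAnnihilator
  exact projective_iSup_of_isProj (fun _ _ h => Submodule.dualAnnihilator_anti (hF h))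
    (by rw [hF0, Submodule.dualAnnihilator_top]) fun t => isProj_dualAnnihilator (hπ t)

theorem exists_surjective_finsupp_nat_filtrationDual
    [∀ t, Module.Finite A (M ⧸ F t)] [∀ t, Projective A (M ⧸ F t)] :
    ∃ g : (ℕ →₀ A) →ₗ[A] filtrationDual F, Surjective g :=
  exists_surjective_finsupp_nat_iSup fun t => Module.Finite.iff_fg.mp <|
    .equiv (F t).dualQuotEquivDualAnnihilator

theorem finite_support_filtrationDual (hF : Antitone F) {m : ℕ → M} (hm : ∀ k, m k ∈ F k)
    {φ : Dual A M} (hφ : φ ∈ filtrationDual F) : (support fun k => φ (m k)).Finite := by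
  obtain ⟨t, ht⟩ := (mem_filtrationDual hF).mp hφ
  refine (Set.finite_Iio t).subset fun k hk => ?_
  by_contra htk
  exact hk ((Submodule.mem_dualAnnihilator φ).mp ht _ (hF (not_lt.mp htk) (hm k)))

/-- Evaluation of continuous forms along a sequence `m` tending to `0` for the filtration; the
values form a finitely supported sequence. -/
noncomputable def filtrationDualEval (hF : Antitone F) (m : ℕ → M) (hm : ∀ k, m k ∈ F k) :
    filtrationDual F →ₗ[A] (ℕ →₀ A) where
  toFun φ := Finsupp.ofSupportFinite _ (finite_support_filtrationDual hF hm φ.2)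
  map_add' _ _ := Finsupp.ext fun _ => rfl
  map_smul' _ _ := Finsupp.ext fun _ => rfl

theorem exists_surjective_filtrationDual_finsupp_nat (hF : Antitone F)
    (h : ∀ t, ∃ m ∈ F t, ∃ φ ∈ filtrationDual F, φ m = 1) :
    ∃ f : filtrationDual F →ₗ[A] (ℕ →₀ A), Surjective f := by
  choose m hm φ hφ hφm using h
  choose u hu using fun t => (mem_filtrationDual hF).mp (hφ t)
  let s (k : ℕ) : ℕ := (fun t => max (t + 1) (u t))^[k] 0
  have s_succ (k : ℕ) : s (k + 1) = max (s k + 1) (u (s k)) := iterate_succ_apply' _ _ _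
  have s_mono : StrictMono s := strictMono_nat_of_lt_succ fun k => by rw [s_succ]; omega
  refine ⟨filtrationDualEval hF (m ∘ s) fun k => hF (s_mono.id_le k) (hm (s k)),
    surjective_of_unitriangular _ (fun k => (⟨φ (s k), hφ (s k)⟩ : filtrationDual F))
      (fun k => hφm (s k)) ?_⟩
  intro k i hki
  have hle : u (s k) ≤ s i :=
    (le_max_right _ _).trans ((s_succ k).symm.trans_le (s_mono.monotone hki))
  exact (Submodule.mem_dualAnnihilator _).mp (hu (s k)) _ (hF hle (hm (s i)))

/- If `π` projects onto `F (t + N)`, which `φ` annihilates, then `φ + ψ (last N) ∘ π` takes the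
value `φ m + ψ (last N) (u (last N))` at `m - π m + u (last N)`. -/
theorem exists_apply_eq_sum [∀ t, Projective A (M ⧸ F t)] (hF : Antitone F) (t N : ℕ)
    (ψ : Fin N → Dual A M) (u : Fin N → M)
    (hψ : ∀ q : Fin N, ψ q ∈ (F (t + q + 1)).dualAnnihilator)
    (hu : ∀ q : Fin N, u q ∈ F (t + q)) :
    ∃ m ∈ F t, ∃ φ ∈ (F (t + N)).dualAnnihilator, φ m = ∑ q, ψ q (u q) := by
  induction N with
  | zero => exact ⟨0, zero_mem _, 0, zero_mem _, by simp⟩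
  | succ N ih =>
    obtain ⟨m, hm, φ, hφ, hφm⟩ := ih (fun q => ψ q.castSucc) (fun q => u q.castSucc)
      (fun q => hψ q.castSucc) (fun q => hu q.castSucc)
    obtain ⟨π, hπ⟩ := exists_isProj_of_projective_quotient (F (t + N))
    have hu_last : u (Fin.last N) ∈ F (t + N) := hu (Fin.last N)
    have hψ_last : ψ (Fin.last N) ∈ (F (t + N + 1)).dualAnnihilator := hψ (Fin.last N)
    simp only [Submodule.mem_dualAnnihilator] at hφ hψ_last ⊢
    refine ⟨m - π m + u (Fin.last N), ?_, φ + ψ (Fin.last N) ∘ₗ π, fun x hx => ?_, ?_⟩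
    · have hle : F (t + N) ≤ F t := hF (Nat.le_add_right t N)
      exact add_mem (sub_mem hm (hle (hπ.map_mem m))) (hle hu_last)
    · have hx' : x ∈ F (t + N) := hF (Nat.le_succ _) hx
      simp [hφ x hx', hπ.map_id x hx', hψ_last x hx]
    · simp [Fin.sum_univ_castSucc, ← hφm, hφ _ (hπ.map_mem m), hφ _ hu_last,
        hπ.map_id _ (hπ.map_mem m), hπ.map_id _ hu_last]

end Filtration

section OrderIdeal

open TensorProduct

variable {A : Type*} [CommRing A]

theorem injective_of_surjective_of_ker_le_smul_top {P Q : Type*} [AddCommGroup P] [Module A P]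
    [AddCommGroup Q] [Module A Q] [Module.Finite A P] [Free A P] [Module.Finite A Q] [Free A Q]
    {g : P →ₗ[A] Q} (hg : Surjective g) {a : Ideal A} (ha : a ≠ ⊤)
    (hker : LinearMap.ker g ≤ a • ⊤) : Injective g := by
  have : Nontrivial (A ⧸ a) := Ideal.Quotient.nontrivial_iff.mpr ha
  have : Nontrivial A := (Ideal.Quotient.mk a).domain_nontrivial
  obtain ⟨s, hs⟩ := projective_lifting_property g LinearMap.id hg
  have hs' (x : Q) : g (s x) = x := LinearMap.congr_fun hs x
  have hs_surj : Surjective (s.baseChange (A ⧸ a)) := by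
    rw [← LinearMap.range_eq_top, eq_top_iff]
    rintro z -
    induction z with
    | zero => exact zero_mem _
    | add x y hx hy => exact add_mem hx hy
    | tmul c p =>
      obtain ⟨c, rfl⟩ := Ideal.Quotient.mk_surjective c
      refine ⟨Ideal.Quotient.mk a c ⊗ₜ g p, (quotTensorEquivQuotSMul P a).injective ?_⟩
      have hp : s (g p) - p ∈ LinearMap.ker g := by simp [hs']
      rw [LinearMap.baseChange_tmul, quotTensorEquivQuotSMul_mk_tmul,
        quotTensorEquivQuotSMul_mk_tmul, Submodule.Quotient.eq, ← smul_sub]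
      exact Submodule.smul_mem _ c (hker hp)
  have hrank : finrank A P ≤ finrank A Q := by
    simpa [finrank_baseChange] using LinearMap.finrank_le_finrank_of_surjective hs_surj
  exact (OrzechProperty.bijective_of_surjective_of_finrank_le g hg hrank).1

theorem eq_of_le_smul_top_sup {M : Type*} [AddCommGroup M] [Module A M] {N N' : Submodule A M}
    [Module.Finite A (M ⧸ N)] [Free A (M ⧸ N)] [Module.Finite A (M ⧸ N')] [Free A (M ⧸ N')]
    (hle : N ≤ N') {a : Ideal A} (ha : a ≠ ⊤) (h : N' ≤ a • ⊤ ⊔ N) : N = N' := by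
  have hker : LinearMap.ker (Submodule.factor hle) ≤ a • ⊤ := by
    intro x hx
    obtain ⟨m, rfl⟩ := N.mkQ_surjective x
    have hm : m ∈ N' := by simpa using hx
    have hmap : N.mkQ m ∈ (a • ⊤ ⊔ N).map N.mkQ := Submodule.mem_map_of_mem (h hm)
    simpa [Submodule.map_smul''] using hmap
  have hinj := injective_of_surjective_of_ker_le_smul_top (Submodule.factor_surjective hle) ha hker
  refine hle.antisymm fun m hm => ?_
  rw [← Submodule.Quotient.mk_eq_zero] at hm ⊢
  exact hinj (by simpa using hm)

variable {P : Type*} [AddCommGroup P] [Module A P]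

variable (A) in
/-- The order ideal of an element (in the sense of Bass): the set of values taken on it by the
linear forms. An element is unimodular when its order ideal is the unit ideal. -/
def orderIdeal (p : P) : Ideal A :=
  LinearMap.range (Dual.eval A P p)

theorem apply_mem_orderIdeal (φ : Dual A P) (p : P) : φ p ∈ orderIdeal A p :=
  LinearMap.mem_range_self (Dual.eval A P p) φ

theorem mem_orderIdeal_smul_top [Projective A P] (p : P) :
    p ∈ (orderIdeal A p • ⊤ : Submodule A P) := by
  obtain ⟨s, hs⟩ := Projective.out (R := A) (P := P)
  have hmem : (s p).sum (fun x c => c • x) ∈ (orderIdeal A p • ⊤ : Submodule A P) :=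
    Submodule.sum_mem _ fun x _ => Submodule.smul_mem_smul
      (apply_mem_orderIdeal (Finsupp.lapply x ∘ₗ s) p) Submodule.mem_top
  rwa [show (s p).sum (fun x c => c • x) = p from hs p] at hmem

theorem mem_smul_top_sup_of_orderIdeal_mkQ_le {N : Submodule A P} [Projective A (P ⧸ N)]
    {a : Ideal A} {p : P} (h : orderIdeal A (N.mkQ p) ≤ a) : p ∈ (a • ⊤ ⊔ N : Submodule A P) := by
  have hp : N.mkQ p ∈ (a • ⊤ : Submodule A P).map N.mkQ := by
    rw [Submodule.map_smul'', Submodule.map_top, Submodule.range_mkQ]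
    exact Submodule.smul_mono_left h (mem_orderIdeal_smul_top _)
  rwa [← Submodule.mem_comap, Submodule.comap_map_mkQ, sup_comm] at hp

theorem exists_sum_apply_eq_one {ι : Type*} [Fintype ι] {p : ι → P}
    (h : ⨆ q, orderIdeal A (p q) = ⊤) : ∃ φ : ι → Dual A P, ∑ q, φ q (p q) = 1 := by
  obtain ⟨c, hc, hsum⟩ := (Submodule.mem_iSup_iff_exists_finsupp _ _).mp
    (h.symm ▸ Submodule.mem_top : (1 : A) ∈ ⨆ q, orderIdeal A (p q))
  choose φ hφ using hc
  exact ⟨φ, by simpa [← hφ, Finsupp.sum_fintype] using hsum⟩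

end OrderIdeal

section PowerFiltration

variable {R : Type*} [CommRing R] {M : Type*} [AddCommGroup M] [Module R M] {I J : Ideal R}

open scoped Pointwise in
/- Pigeonhole: some generator occurs at least `n` times in a product of `T` generators. -/
theorem span_pow_le_mul_span_image_pow (X : Finset R) {n T : ℕ} (hT : X.card * n < T) :
    Ideal.span (X : Set R) ^ T ≤
      Ideal.span (X : Set R) ^ (T - n) * Ideal.span ((· ^ n) '' (X : Set R)) := by
  classical
  refine (Submodule.span_pow (R := R) (X : Set R) T).trans_le (Submodule.span_le.mpr ?_)
  intro p hp
  obtain ⟨f, rfl⟩ := Set.mem_pow.mp hp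
  obtain ⟨x, hx, hcard⟩ := Finset.exists_lt_card_fiber_of_mul_lt_card_of_maps_to
    (s := Finset.univ) (f := fun i => (f i : R)) (fun i _ => (f i).2) (by simpa using hT)
  obtain ⟨S, hS, hSn⟩ := Finset.exists_subset_card_eq hcard.le
  have hSx : ∏ i ∈ S, (f i : R) = x ^ n := by
    rw [← hSn]
    exact Finset.prod_eq_pow_card fun i hi => (Finset.mem_filter.mp (hS hi)).2
  have hSc : Sᶜ.card = T - n := by simp [Finset.card_compl, hSn]
  rw [List.prod_ofFn, ← Finset.prod_compl_mul_prod S, hSx, ← hSc, ← Finset.prod_const]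
  exact Ideal.mul_mem_mul (Ideal.prod_mem_prod fun i _ => Ideal.subset_span (f i).2)
    (Ideal.subset_span ⟨x, hx, rfl⟩)

theorem pow_smul_top_le_sup (hJI : J ≤ I) (h : (I • ⊤ : Submodule R M) ≤ J • ⊤ ⊔ I ^ 2 • ⊤)
    (t : ℕ) : (I ^ t • ⊤ : Submodule R M) ≤ J ^ t • ⊤ ⊔ I ^ (t + 1) • ⊤ := by
  induction t with
  | zero => simp
  | succ t ih =>
    calc (I ^ (t + 1) • ⊤ : Submodule R M)
        = I • (I ^ t • ⊤ : Submodule R M) := by rw [← mul_smul, pow_succ']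
      _ ≤ I • (J ^ t • ⊤ ⊔ I ^ (t + 1) • ⊤) := Submodule.smul_mono le_rfl ih
      _ = J ^ t • (I • ⊤ : Submodule R M) ⊔ I ^ (t + 1 + 1) • ⊤ := by
          simp only [Submodule.smul_sup, ← mul_smul, mul_comm I, ← pow_succ]
      _ ≤ J ^ t • (J • ⊤ ⊔ I ^ 2 • ⊤ : Submodule R M) ⊔ I ^ (t + 1 + 1) • ⊤ :=
          sup_le_sup_right (Submodule.smul_mono le_rfl h) _
      _ = J ^ (t + 1) • ⊤ ⊔ ((J ^ t * I ^ 2) • ⊤ ⊔ I ^ (t + 1 + 1) • ⊤) := by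
          rw [Submodule.smul_sup, ← mul_smul, ← mul_smul, ← pow_succ, sup_assoc]
      _ ≤ J ^ (t + 1) • ⊤ ⊔ I ^ (t + 1 + 1) • ⊤ := by
          have hle : J ^ t * I ^ 2 ≤ I ^ (t + 1 + 1) :=
            (Ideal.mul_mono_left (Ideal.pow_right_mono hJI t)).trans_eq (pow_add I t 2).symm
          exact sup_le_sup_left (sup_le (Submodule.smul_mono_left hle) le_rfl) _

theorem pow_smul_top_le_sup_of_span_image_pow {X : Finset R} (hX : (X : Set R) ⊆ I)
    (h : (I • ⊤ : Submodule R M) ≤ Ideal.span (X : Set R) • ⊤ ⊔ I ^ 2 • ⊤) {n T : ℕ}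
    (hT : X.card * n < T) (hnT : n ≤ T) {B : Submodule R M}
    (hB : Ideal.span ((· ^ n) '' (X : Set R)) • ⊤ ≤ B ⊔ I ^ (n + 1) • ⊤) :
    (I ^ T • ⊤ : Submodule R M) ≤ B ⊔ I ^ (T + 1) • ⊤ := by
  have hXI : Ideal.span (X : Set R) ≤ I := Ideal.span_le.mpr hX
  refine (pow_smul_top_le_sup hXI h T).trans (sup_le ?_ le_sup_right)
  calc (Ideal.span (X : Set R) ^ T • ⊤ : Submodule R M)
      ≤ (Ideal.span (X : Set R) ^ (T - n) * Ideal.span ((· ^ n) '' (X : Set R))) • ⊤ :=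
        Submodule.smul_mono_left (span_pow_le_mul_span_image_pow X hT)
    _ ≤ I ^ (T - n) • (B ⊔ I ^ (n + 1) • ⊤) := by
        rw [mul_smul]
        exact Submodule.smul_mono (Ideal.pow_right_mono hXI _) hB
    _ ≤ B ⊔ I ^ (T + 1) • ⊤ := by
        rw [Submodule.smul_sup, ← mul_smul, ← pow_add,
          show T - n + (n + 1) = T + 1 by omega]
        exact sup_le_sup_right Submodule.smul_le_right _

theorem pow_smul_top_eq_of_le {t u : ℕ} (h : (I ^ t • ⊤ : Submodule R M) = I ^ (t + 1) • ⊤)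
    (htu : t ≤ u) : (I ^ u • ⊤ : Submodule R M) = I ^ t • ⊤ := by
  induction u, htu using Nat.le_induction with
  | base => rfl
  | succ u _ ih => rw [pow_succ', mul_smul, ih, ← mul_smul, ← pow_succ', h]

theorem exists_finset_smul_top_le_sup {N : Submodule R M}
    (h : ((I • ⊤ : Submodule R M).map N.mkQ).FG) :
    ∃ X : Finset R, (X : Set R) ⊆ I ∧
      (I • ⊤ : Submodule R M) ≤ Ideal.span (X : Set R) • ⊤ ⊔ N := by
  classical
  have hspan : (I • ⊤ : Submodule R M).map N.mkQ =
      Submodule.span R (Set.image2 (fun r m => N.mkQ (r • m)) (I : Set R) Set.univ) := by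
    rw [← Set.image_image2 (fun r m => r • m) N.mkQ, ← Submodule.map_span, Submodule.smul_eq_map₂,
      Submodule.map₂_eq_span_image2]
    rfl
  rw [hspan, Submodule.fg_span_iff_fg_span_finset_subset] at h
  obtain ⟨S, hS, hS_span⟩ := h
  obtain ⟨X, Y, hX, -, hXY⟩ := Finset.subset_set_image₂ hS
  refine ⟨X, hX, ?_⟩
  rw [sup_comm, ← Submodule.comap_map_mkQ, ← Submodule.map_le_iff_le_comap, hspan, hS_span,
    Submodule.span_le]
  intro _ hs
  obtain ⟨x, hx, m, -, rfl⟩ := Finset.mem_image₂.mp (hXY hs)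
  exact Submodule.mem_map_of_mem
    (Submodule.smul_mem_smul (Ideal.subset_span hx) Submodule.mem_top)

theorem exists_finset_span_sup_eq_top (N : Submodule R M) [Module.Finite R (M ⧸ N)] :
    ∃ E : Finset M, Submodule.span R (E : Set M) ⊔ N = ⊤ := by
  classical
  obtain ⟨S, hS⟩ := Module.Finite.fg_top (R := R) (M := M ⧸ N)
  obtain ⟨E, -, hES⟩ := Finset.subset_set_image_iff.mp
    (Set.image_univ_of_surjective N.mkQ_surjective ▸ Set.subset_univ (S : Set (M ⧸ N)))
  refine ⟨E, ?_⟩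
  rw [sup_comm, ← Submodule.comap_map_mkQ, Submodule.map_span, ← Finset.coe_image, hES, hS,
    Submodule.comap_top]

theorem span_image_pow_smul_top_le {X : Finset R} (hX : (X : Set R) ⊆ I) {E : Finset M}
    (hE : Submodule.span R (E : Set M) ⊔ I • ⊤ = ⊤) {n : ℕ} {B : Submodule R M}
    (h : ∀ x ∈ X, ∀ e ∈ E, x ^ n • e ∈ B ⊔ I ^ (n + 1) • ⊤) :
    Ideal.span ((· ^ n) '' (X : Set R)) • ⊤ ≤ B ⊔ I ^ (n + 1) • ⊤ := by
  have hpow : Ideal.span ((· ^ n) '' (X : Set R)) ≤ I ^ n :=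
    Ideal.span_le.mpr <| Set.image_subset_iff.mpr fun x hx => Ideal.pow_mem_pow (hX hx) n
  refine (Submodule.smul_mono le_rfl hE.ge).trans ?_
  rw [Submodule.smul_sup, Submodule.span_smul_span]
  refine sup_le (Submodule.span_le.mpr ?_) ?_
  · rintro _ ⟨_, ⟨x, hx, rfl⟩, e, he, rfl⟩
    exact h x hx e he
  · rw [← mul_smul, pow_succ]
    exact (Submodule.smul_mono_left (Ideal.mul_mono_left hpow)).trans le_sup_right

end PowerFiltration

section AdicFiltration

variable {A : Type*} [CommRing A] {R : Type*} [CommRing R] [Algebra A R] {I : Ideal R}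
  {M : Type*} [AddCommGroup M] [Module A M] [Module R M] [IsScalarTower A R M]

variable (A I M) in
/-- The `I`-adic filtration of an `R`-module `M`, as a filtration by `A`-submodules. -/
def adicFiltration (t : ℕ) : Submodule A M :=
  (I ^ t • ⊤ : Submodule R M).restrictScalars A

variable (A I M) in
/-- The quotients of the filtration, formed over `A`, are the usual `R`-modules `M / I ^ t M`. -/
def adicFiltrationQuotEquiv (t : ℕ) :
    (M ⧸ adicFiltration A I M t) ≃ₗ[A] M ⧸ (I ^ t • ⊤ : Submodule R M) :=
  Submodule.Quotient.restrictScalarsEquiv A _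

theorem mem_adicFiltration {t : ℕ} {m : M} :
    m ∈ adicFiltration A I M t ↔ m ∈ (I ^ t • ⊤ : Submodule R M) :=
  Iff.rfl

theorem antitone_adicFiltration : Antitone (adicFiltration A I M) := by
  intro t u h m hm
  rw [mem_adicFiltration] at hm ⊢
  exact Submodule.smul_mono_left (Ideal.pow_le_pow_right h) hm

theorem adicFiltration_zero : adicFiltration A I M 0 = ⊤ := by
  simp [adicFiltration]

theorem smul_mem_adicFiltration {d n : ℕ} {y : R} (hy : y ∈ I ^ d) {m : M}
    (hm : m ∈ adicFiltration A I M n) : y • m ∈ adicFiltration A I M (d + n) := by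
  rw [mem_adicFiltration] at hm ⊢
  rw [pow_add, mul_smul]
  exact Submodule.smul_mem_smul hy hm

theorem smul_top_sup_adicFiltration (a : Ideal A) (t : ℕ) :
    a • ⊤ ⊔ adicFiltration A I M t =
      (a.map (algebraMap A R) • ⊤ ⊔ I ^ t • ⊤ : Submodule R M).restrictScalars A := by
  rw [Submodule.restrictScalars_sup, Ideal.smul_restrictScalars, Submodule.restrictScalars_top,
    adicFiltration]

theorem mem_dualAnnihilator_adicFiltration {t : ℕ} {φ : Dual A M} :
    φ ∈ (adicFiltration A I M t).dualAnnihilator ↔ ∀ r ∈ I ^ t, ∀ m : M, φ (r • m) = 0 := by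
  simp only [Submodule.mem_dualAnnihilator, mem_adicFiltration]
  refine ⟨fun h r hr m => h _ (Submodule.smul_mem_smul hr Submodule.mem_top), fun h m hm => ?_⟩
  induction hm using Submodule.smul_induction_on' with
  | smul r hr m _ => exact h r hr m
  | add x _ y _ hx hy => rw [map_add, hx, hy, add_zero]

theorem adicFiltration_eq_of_le {t u : ℕ}
    (h : adicFiltration A I M t = adicFiltration A I M (t + 1)) (htu : t ≤ u) :
    adicFiltration A I M u = adicFiltration A I M t :=
  congrArg (Submodule.restrictScalars A)
    (pow_smul_top_eq_of_le (Submodule.restrictScalars_injective A R M h) htu)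

variable (A) in
theorem exists_finset_smul_top_le_sup_pow_two [Module.Finite A (M ⧸ adicFiltration A I M 2)]
    [Module.Finite A (M ⧸ adicFiltration A I M 1)]
    [Projective A (M ⧸ adicFiltration A I M 1)] :
    ∃ X : Finset R, (X : Set R) ⊆ I ∧
      (I • ⊤ : Submodule R M) ≤ Ideal.span (X : Set R) • ⊤ ⊔ I ^ 2 • ⊤ := by
  have hfg : ((adicFiltration A I M 1).map (adicFiltration A I M 2).mkQ).FG :=
    fg_map_mkQ_of_le (antitone_adicFiltration one_le_two)
  refine exists_finset_smul_top_le_sup (Submodule.FG.of_restrictScalars A ?_)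
  convert! hfg.map (adicFiltrationQuotEquiv A I M 2).toLinearMap
  rw [← Submodule.map_comp, show I • ⊤ = (I ^ 1 • ⊤ : Submodule R M) by rw [pow_one]]
  rfl

theorem eq_top_of_orderIdeal_le [∀ t, Module.Finite A (M ⧸ adicFiltration A I M t)]
    [∀ t, Free A (M ⧸ adicFiltration A I M t)]
    (hne : ∀ t, adicFiltration A I M t ≠ adicFiltration A I M (t + 1))
    {X : Finset R} (hX : (X : Set R) ⊆ I)
    (hX_span : (I • ⊤ : Submodule R M) ≤ Ideal.span (X : Set R) • ⊤ ⊔ I ^ 2 • ⊤)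
    {E : Finset M} (hE : Submodule.span R (E : Set M) ⊔ I • ⊤ = ⊤) (n : ℕ) {a : Ideal A}
    (ha : ∀ x ∈ X, ∀ e ∈ E, orderIdeal A ((adicFiltration A I M (n + 1)).mkQ (x ^ n • e)) ≤ a) :
    a = ⊤ := by
  by_contra ha_top
  have hXE : ∀ x ∈ X, ∀ e ∈ E,
      x ^ n • e ∈ (a.map (algebraMap A R) • ⊤ ⊔ I ^ (n + 1) • ⊤ : Submodule R M) := by
    intro x hx e he
    rw [← Submodule.restrictScalars_mem A, ← smul_top_sup_adicFiltration]
    exact mem_smul_top_sup_of_orderIdeal_mkQ_le (ha x hx e he)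
  let T := X.card * n + n + 1
  have hT : (I ^ T • ⊤ : Submodule R M) ≤ a.map (algebraMap A R) • ⊤ ⊔ I ^ (T + 1) • ⊤ :=
    pow_smul_top_le_sup_of_span_image_pow hX hX_span (by omega) (by omega)
      (span_image_pow_smul_top_le hX hE hXE)
  have hT' : adicFiltration A I M T ≤ a • ⊤ ⊔ adicFiltration A I M (T + 1) := by
    rw [smul_top_sup_adicFiltration]
    exact hT
  exact hne T (eq_of_le_smul_top_sup (antitone_adicFiltration T.le_succ) ha_top hT').symm

theorem exists_iSup_orderIdeal_eq_top [∀ t, Module.Finite A (M ⧸ adicFiltration A I M t)]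
    [∀ t, Free A (M ⧸ adicFiltration A I M t)]
    (hne : ∀ t, adicFiltration A I M t ≠ adicFiltration A I M (t + 1)) :
    ∃ (N : ℕ) (x : Fin N → R) (e : Fin N → M), (∀ q, x q ∈ I) ∧ ∀ n,
      ⨆ q, orderIdeal A ((adicFiltration A I M (n + 1)).mkQ (x q ^ n • e q)) = ⊤ := by
  obtain ⟨X, hX, hX_span⟩ := exists_finset_smul_top_le_sup_pow_two A (M := M) (I := I)
  have : Module.Finite R (M ⧸ (I • ⊤ : Submodule R M)) := by
    have := Module.Finite.equiv (adicFiltrationQuotEquiv A I M 1)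
    rw [← pow_one I]
    exact .of_restrictScalars_finite A R _
  obtain ⟨E, hE⟩ := exists_finset_span_sup_eq_top (I • ⊤ : Submodule R M)
  let pair := (Fintype.equivFin (X × E)).symm
  refine ⟨_, fun q => (pair q).1, fun q => (pair q).2, fun q => hX (pair q).1.2, fun n =>
    eq_top_of_orderIdeal_le hne hX hX_span hE n fun x hx e he => ?_⟩
  obtain ⟨q, hq⟩ := pair.surjective (⟨x, hx⟩, ⟨e, he⟩)
  exact le_iSup_of_le q (by simp only [hq, le_rfl])

theorem exists_mem_adicFiltration_apply_eq_one
    [∀ t, Module.Finite A (M ⧸ adicFiltration A I M t)]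
    [∀ t, Free A (M ⧸ adicFiltration A I M t)]
    (hne : ∀ t, adicFiltration A I M t ≠ adicFiltration A I M (t + 1)) (t : ℕ) :
    ∃ m ∈ adicFiltration A I M t, ∃ φ ∈ filtrationDual (adicFiltration A I M), φ m = 1 := by
  have hF : Antitone (adicFiltration A I M) := antitone_adicFiltration
  obtain ⟨N, x, e, hx, hxe⟩ := exists_iSup_orderIdeal_eq_top hne
  obtain ⟨φ, hφ⟩ := exists_sum_apply_eq_one (hxe (t + N))
  let ψ (q : Fin N) : Dual A M := φ q ∘ₗ (adicFiltration A I M (t + N + 1)).mkQ ∘ₗ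
    Algebra.lsmul A A M (x q ^ (N - q : ℕ))
  have hψ_apply (q : Fin N) (m : M) : ψ q m =
      φ q ((adicFiltration A I M (t + N + 1)).mkQ (x q ^ (N - q : ℕ) • m)) := rfl
  have hψ (q : Fin N) : ψ q ∈ (adicFiltration A I M (t + q + 1)).dualAnnihilator := by
    refine (Submodule.mem_dualAnnihilator _).mpr fun m hm => ?_
    have hmem := smul_mem_adicFiltration (Ideal.pow_mem_pow (hx q) (N - q)) hm
    rw [show N - q + (t + q + 1) = t + N + 1 by omega] at hmem
    rw [hψ_apply, Submodule.mkQ_apply, (Submodule.Quotient.mk_eq_zero _).mpr hmem, map_zero]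
  have hu (q : Fin N) : x q ^ (t + q : ℕ) • e q ∈ adicFiltration A I M (t + q) :=
    smul_mem_adicFiltration (A := A) (n := 0) (Ideal.pow_mem_pow (hx q) _)
      (by rw [adicFiltration_zero]; trivial)
  have hψu (q : Fin N) : ψ q (x q ^ (t + q : ℕ) • e q) =
      φ q ((adicFiltration A I M (t + N + 1)).mkQ (x q ^ (t + N) • e q)) := by
    rw [hψ_apply, ← mul_smul, ← pow_add, show N - q + (t + q) = t + N by omega]
  obtain ⟨m, hm, Φ, hΦ, hΦm⟩ := exists_apply_eq_sum hF t N ψ _ hψ hu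
  exact ⟨m, hm, Φ, (mem_filtrationDual hF).mpr ⟨_, hΦ⟩, by simpa only [hΦm, hψu] using hφ⟩

theorem free_filtrationDual_adicFiltration
    [∀ t, Module.Finite A (M ⧸ adicFiltration A I M t)]
    [∀ t, Free A (M ⧸ adicFiltration A I M t)] :
    Free A (filtrationDual (adicFiltration A I M)) := by
  have hF : Antitone (adicFiltration A I M) := antitone_adicFiltration
  by_cases hne : ∀ t, adicFiltration A I M t ≠ adicFiltration A I M (t + 1)
  · have := projective_filtrationDual hF adicFiltration_zero
    obtain ⟨g, hg⟩ := exists_surjective_finsupp_nat_filtrationDual (F := adicFiltration A I M)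
    obtain ⟨f, hf⟩ := exists_surjective_filtrationDual_finsupp_nat hF
      (exists_mem_adicFiltration_apply_eq_one hne)
    obtain ⟨e⟩ := nonempty_equiv_finsupp_nat_of_surjective (A := A)
      (P := filtrationDual (adicFiltration A I M)) hg hf
    exact .of_equiv e.symm
  · push Not at hne
    obtain ⟨t, ht⟩ := hne
    have heq : filtrationDual (adicFiltration A I M) = (adicFiltration A I M t).dualAnnihilator :=
      (iSup_le fun u => Submodule.dualAnnihilator_anti <|
        (hF (le_max_left u t)).trans' (adicFiltration_eq_of_le ht (le_max_right u t)).ge).antisymm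
        (dualAnnihilator_le_filtrationDual t)
    rw [heq]
    exact .of_equiv (adicFiltration A I M t).dualQuotEquivDualAnnihilator

theorem continuousDual_eq_filtrationDual {k : ℕ} (hk : k ≠ 0) :
    ContinuousDual A R I M = filtrationDual (adicFiltration A (I ^ k) M) := by
  ext φ
  simp only [mem_filtrationDual antitone_adicFiltration, mem_dualAnnihilator_adicFiltration,
    ← pow_mul]
  refine ⟨fun ⟨t, ht⟩ => ⟨t, fun r hr => ht r ?_⟩, fun ⟨t, ht⟩ => ⟨k * t, ht⟩⟩
  exact Ideal.pow_le_pow_right (Nat.le_mul_of_pos_left t (Nat.pos_of_ne_zero hk)) hr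

end AdicFiltration

theorem stmt8_general {A : Type*} [CommRing A] {R : Type*} [CommRing R] [Algebra A R]
    (I : Ideal R) (M : Type*) [AddCommGroup M] [Module A M] [Module R M] [IsScalarTower A R M]
    (h : ∀ᶠ t : ℕ in Filter.atTop, Module.Finite A (M ⧸ (I ^ t • ⊤ : Submodule R M)) ∧
      Module.Free A (M ⧸ (I ^ t • ⊤ : Submodule R M))) :
    Module.Free A (ContinuousDual A R I M) := by
  obtain ⟨k, hk⟩ := Filter.eventually_atTop.mp h
  have hquot (t : ℕ) : Module.Finite A (M ⧸ adicFiltration A (I ^ (k + 1)) M t) ∧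
      Module.Free A (M ⧸ adicFiltration A (I ^ (k + 1)) M t) := by
    obtain rfl | ht := Nat.eq_zero_or_pos t
    · rw [adicFiltration_zero]
      exact ⟨inferInstance, inferInstance⟩
    · obtain ⟨hfin, hfree⟩ := hk ((k + 1) * t) (k.le_succ.trans (Nat.le_mul_of_pos_right _ ht))
      rw [pow_mul] at hfin hfree
      exact ⟨.equiv (adicFiltrationQuotEquiv A (I ^ (k + 1)) M t).symm,
        .of_equiv (adicFiltrationQuotEquiv A (I ^ (k + 1)) M t).symm⟩
  have := fun t => (hquot t).1
  have := fun t => (hquot t).2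
  rw [continuousDual_eq_filtrationDual k.succ_ne_zero]
  exact free_filtrationDual_adicFiltration

/-- **Freeness of the relative Matlis dual.**  If every `M/IᵗM` is a finitely generated free
`A`-module, then `Hom_A^cts(M, A)` is a free `A`-module. -/
theorem stmt8 (A : Type) [CommRing A] (R : Type) [CommRing R] [Algebra A R] (I : Ideal R)
    (M : Type) [AddCommGroup M] [Module A M] [Module R M] [IsScalarTower A R M]
    (hfin : ∀ t : ℕ, 1 ≤ t → Module.Finite A (M ⧸ (I ^ t • ⊤ : Submodule R M)))
    (hfree : ∀ t : ℕ, 1 ≤ t → Module.Free A (M ⧸ (I ^ t • ⊤ : Submodule R M))) :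
    Module.Free A (ContinuousDual A R I M) :=
  stmt8_general I M <| (Filter.eventually_ge_atTop 1).mono fun t ht => ⟨hfin t ht, hfree t ht⟩
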